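/- Let M and M_S be positive integers with M ≥ M_S, and let P_S be an arbitrary probability distribution on 𝒮 = {0,1,…,M_S−1}, regarded as a subset of ℤ_M. Let S ~ P_S and let U be uniformly distributed on ℤ_M and independent of S. Define the encoder f*(s,u) = (s ⊖ u, u) ∈ ℤ_M × ℤ_M (⊖ is subtraction modulo M) and the shares (X,Y) = f*(S,U), and the decoder g*(x,y) = x ⊕ y if x ⊕ y ∈ 𝒮 and g*(x,y) = λ otherwise (⊕ is addition modulo M). Then g*(X,Y) = S almost surely (so H(S|X,Y) = 0), S is independent of X and S is independent of Y (so H(S|X) = H(S|Y) = H(S)), and I(X;Y) = log₂ M − H(S). Hence (f*, g*) realizes a (2,2)-threshold scheme with correlation level log₂ M − H(S) in the non-asymptotic sense, with |𝒳| = |𝒴| = |𝒰| = M and |𝒮| = M_S. -/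

import Mathlib

open Finset Filter Real
open scoped BigOperators

noncomputable section

/-- `p` is a probability mass function on a finite type. -/
def IsPMF {α : Type*} [Fintype α] (p : α → ℝ) : Prop :=
  (∀ a, 0 ≤ p a) ∧ ∑ a, p a = 1

open scoped Classical in
/-- The distribution (pushforward pmf) of a random variable `X`
defined on a finite sample space carrying the pmf `p`. -/
def distOf {Ω α : Type*} [Fintype Ω] (p : Ω → ℝ) (X : Ω → α) (x : α) : ℝ :=
  ∑ ω ∈ Finset.univ.filter fun ω => X ω = x, p ω

/-- Base-2 Shannon entropy of a pmf on a finite type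
(the convention `0 · log₂ 0 = 0` holds since `Real.logb 2 0 = 0`). -/
def ent {α : Type*} [Fintype α] (q : α → ℝ) : ℝ :=
  -∑ x, q x * Real.logb 2 (q x)

/-- Base-2 entropy `H(X)` of a random variable `X` under pmf `p`. -/
def entRV {Ω α : Type*} [Fintype Ω] [Fintype α] (p : Ω → ℝ) (X : Ω → α) : ℝ :=
  ent (distOf p X)

/-- Base-2 conditional entropy `H(X|Y) = H(X,Y) − H(Y)`. -/
def condEnt {Ω α β : Type*} [Fintype Ω] [Fintype α] [Fintype β]
    (p : Ω → ℝ) (X : Ω → α) (Y : Ω → β) : ℝ :=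
  entRV p (fun ω => (X ω, Y ω)) - entRV p Y

/-- Base-2 mutual information `I(X;Y) = H(X) + H(Y) − H(X,Y)`. -/
def MI {Ω α β : Type*} [Fintype Ω] [Fintype α] [Fintype β]
    (p : Ω → ℝ) (X : Ω → α) (Y : Ω → β) : ℝ :=
  entRV p X + entRV p Y - entRV p (fun ω => (X ω, Y ω))

/-- `X` and `Y` are independent random variables under the pmf `p`. -/
def IndepRV {Ω α β : Type*} [Fintype Ω] (p : Ω → ℝ) (X : Ω → α) (Y : Ω → β) : Prop :=
  ∀ a b, distOf p (fun ω => (X ω, Y ω)) (a, b) = distOf p X a * distOf p Y b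

/-!
Write `φ` for the embedding of the messages into the group `G` (here `ℤ_M`). For each message `s`
the map `u ↦ φ s - u` is a permutation of `G`, so a uniform key independent of `S` is turned into a
uniform share, still independent of `S`. Moreover `(s, u) ↦ (φ s - u, u)` is injective, so
`H(X, Y) = H(S, U) = H(S) + log₂ |G|`, while `H(X) = H(Y) = log₂ |G|`.
-/

section Entropy

variable {Ω α β : Type*} [Fintype Ω] {p : Ω → ℝ} {X : Ω → α} {Y : Ω → β}

theorem distOf_congr {a : α} {b : β} (h : ∀ ω, X ω = a ↔ Y ω = b) :
    distOf p X a = distOf p Y b :=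
  Finset.sum_congr (Finset.ext fun ω => by simp [h]) fun _ _ => rfl

theorem sum_distOf_mul [Fintype α] (p : Ω → ℝ) (X : Ω → α) (f : α → ℝ) :
    ∑ a, distOf p X a * f a = ∑ ω, p ω * f (X ω) := by
  classical
  simp only [distOf, Finset.sum_mul, Finset.sum_filter, ite_mul, zero_mul]
  rw [Finset.sum_comm]
  simp

theorem sum_distOf [Fintype α] (p : Ω → ℝ) (X : Ω → α) : ∑ a, distOf p X a = ∑ ω, p ω := by
  simpa using sum_distOf_mul p X 1

theorem sum_distOf_prodMk [Fintype α] (p : Ω → ℝ) (X : Ω → α) (Y : Ω → β) (b : β) :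
    ∑ a, distOf p (fun ω => (X ω, Y ω)) (a, b) = distOf p Y b := by
  classical
  simp only [distOf, Prod.mk.injEq, and_comm (b := Y _ = b), ← Finset.filter_filter]
  exact Finset.sum_fiberwise _ X p

theorem entRV_eq_neg_sum_mul_logb [Fintype α] (p : Ω → ℝ) (X : Ω → α) :
    entRV p X = -∑ ω, p ω * Real.logb 2 (distOf p X (X ω)) :=
  congrArg Neg.neg (sum_distOf_mul p X _)

theorem entRV_eq_of_eq_iff_eq [Fintype α] [Fintype β] (h : ∀ ω ω', X ω = X ω' ↔ Y ω = Y ω') :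
    entRV p X = entRV p Y := by
  simp only [entRV_eq_neg_sum_mul_logb, fun ω => distOf_congr (p := p) fun ω' => h ω' ω]

theorem entRV_of_uniform [Fintype α] [Nonempty α]
    (hX : ∀ a, distOf p X a = 1 / (Fintype.card α : ℝ)) :
    entRV p X = Real.logb 2 (Fintype.card α) := by
  simp [entRV, ent, hX]

theorem condEnt_eq_zero_of_factorsThrough [Fintype α] [Fintype β] (h : X.FactorsThrough Y) :
    condEnt p X Y = 0 := by
  rw [condEnt, sub_eq_zero]
  refine entRV_eq_of_eq_iff_eq fun ω ω' => ?_
  rw [Prod.mk.injEq, and_iff_right_of_imp (@h ω ω')]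

theorem mul_mul_logb_mul (b x y : ℝ) :
    x * y * Real.logb b (x * y) = x * Real.logb b x * y + x * (y * Real.logb b y) := by
  rcases eq_or_ne x 0 with rfl | hx
  · simp
  rcases eq_or_ne y 0 with rfl | hy
  · simp
  rw [Real.logb_mul hx hy]
  ring

theorem IndepRV.entRV_prodMk [Fintype α] [Fintype β] (hp : ∑ ω, p ω = 1) (h : IndepRV p X Y) :
    entRV p (fun ω => (X ω, Y ω)) = entRV p X + entRV p Y := by
  have hX : ∑ a, distOf p X a = 1 := (sum_distOf p X).trans hp
  have hY : ∑ b, distOf p Y b = 1 := (sum_distOf p Y).trans hp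
  simp only [entRV, ent, Fintype.sum_prod_type, h _ _, mul_mul_logb_mul, Finset.sum_add_distrib,
    ← Finset.mul_sum, ← Finset.sum_mul, hX, hY, mul_one, one_mul, neg_add]

theorem IndepRV.condEnt_eq [Fintype α] [Fintype β] (hp : ∑ ω, p ω = 1) (h : IndepRV p X Y) :
    condEnt p X Y = entRV p X := by
  rw [condEnt, h.entRV_prodMk hp, add_sub_cancel_right]

end Entropy

section Masking

variable {Ω α β γ : Type*} [Fintype Ω] {p : Ω → ℝ} {S : Ω → α} {U : Ω → β} {c : ℝ}

theorem IndepRV.distOf_prodMk_equiv_apply (h : IndepRV p S U) (hU : ∀ u, distOf p U u = c)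
    (e : α → β ≃ γ) (s : α) (x : γ) :
    distOf p (fun ω => (S ω, e (S ω) (U ω))) (s, x) = distOf p S s * c := calc
  _ = distOf p (fun ω => (S ω, U ω)) (s, (e s).symm x) := distOf_congr fun ω => by
    simp only [Prod.mk.injEq, Equiv.eq_symm_apply]
    exact and_congr_right fun hs => by rw [hs]
  _ = distOf p S s * c := by rw [h, hU]

theorem IndepRV.distOf_equiv_apply [Finite α] (hp : ∑ ω, p ω = 1) (h : IndepRV p S U)
    (hU : ∀ u, distOf p U u = c) (e : α → β ≃ γ) (x : γ) :
    distOf p (fun ω => e (S ω) (U ω)) x = c := by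
  have := Fintype.ofFinite α
  rw [← sum_distOf_prodMk p S]
  simp only [h.distOf_prodMk_equiv_apply hU, ← Finset.sum_mul, sum_distOf, hp, one_mul]

theorem IndepRV.equiv_apply [Finite α] (hp : ∑ ω, p ω = 1) (h : IndepRV p S U)
    (hU : ∀ u, distOf p U u = c) (e : α → β ≃ γ) :
    IndepRV p S (fun ω => e (S ω) (U ω)) := fun s x => by
  rw [h.distOf_prodMk_equiv_apply hU, h.distOf_equiv_apply hp hU]

end Masking

theorem entRV_sub_prodMk {Ω α G : Type*} [Fintype Ω] [Fintype α] [AddGroup G] [Fintype G]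
    {φ : α → G} (hφ : Function.Injective φ) (p : Ω → ℝ) (S : Ω → α) (U : Ω → G) :
    entRV p (fun ω => (φ (S ω) - U ω, U ω)) = entRV p (fun ω => (S ω, U ω)) := by
  refine entRV_eq_of_eq_iff_eq fun ω ω' => ?_
  simp only [Prod.mk.injEq]
  exact and_congr_left fun hU => by rw [hU, sub_left_inj, hφ.eq_iff]

theorem isPartialInv_natCast_zmod {m n : ℕ} [NeZero n] (hmn : m ≤ n) :
    Function.IsPartialInv (fun s : Fin m => ((s : ℕ) : ZMod n))
      (fun z => if h : z.val < m then some ⟨z.val, h⟩ else none) := by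
  intro s z
  have hval : ((s : ℕ) : ZMod n).val = s := ZMod.val_cast_of_lt (s.2.trans_le hmn)
  constructor
  · intro h
    obtain ⟨_, hs⟩ := Option.dite_none_right_eq_some.mp h
    obtain rfl := Option.some.inj hs
    exact ZMod.natCast_zmod_val z
  · rintro rfl
    simp [hval]

theorem statement17_general {Ω α G : Type*} [Fintype Ω] [Fintype α] [AddGroup G] [Fintype G]
    (φ : α → G) (ψ : G → Option α) (hψ : Function.IsPartialInv φ ψ)
    (p : Ω → ℝ) (hp : IsPMF p) (S : Ω → α)
    (U : Ω → G) (hU : ∀ u, distOf p U u = 1 / (Fintype.card G : ℝ)) (hSU : IndepRV p S U)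
    (X : Ω → G) (hX : ∀ ω, X ω = φ (S ω) - U ω) (Y : Ω → G) (hY : ∀ ω, Y ω = U ω)
    (g : G × G → Option α) (hg : ∀ xy, g xy = ψ (xy.1 + xy.2)) :
    (∀ ω, g (X ω, Y ω) = some (S ω)) ∧
    condEnt p S (fun ω => (X ω, Y ω)) = 0 ∧
    IndepRV p S X ∧ IndepRV p S Y ∧
    condEnt p S X = entRV p S ∧ condEnt p S Y = entRV p S ∧
    MI p X Y = Real.logb 2 (Fintype.card G) - entRV p S := by
  obtain rfl : X = fun ω => φ (S ω) - U ω := funext hX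
  obtain rfl : Y = U := funext hY
  have hdecode (ω : Ω) : g (φ (S ω) - Y ω, Y ω) = some (S ω) := by
    rw [hg, sub_add_cancel, hψ.eq]
  have hdetermined : S.FactorsThrough fun ω => (φ (S ω) - Y ω, Y ω) := fun ω ω' h =>
    Option.some.inj <| (hdecode ω).symm.trans <| (congrArg g h).trans (hdecode ω')
  have hSX : IndepRV p S fun ω => φ (S ω) - Y ω :=
    hSU.equiv_apply hp.2 hU fun s => Equiv.subLeft (φ s)
  have hXunif : ∀ x, distOf p (fun ω => φ (S ω) - Y ω) x = 1 / (Fintype.card G : ℝ) :=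
    hSU.distOf_equiv_apply hp.2 hU fun s => Equiv.subLeft (φ s)
  refine ⟨hdecode, condEnt_eq_zero_of_factorsThrough hdetermined, hSX, hSU,
    hSX.condEnt_eq hp.2, hSU.condEnt_eq hp.2, ?_⟩
  rw [MI, entRV_sub_prodMk hψ.injective, hSU.entRV_prodMk hp.2, entRV_of_uniform hXunif,
    entRV_of_uniform hU, add_sub_add_right_eq_sub]

open scoped Classical in
/-- the modular construction `f*(s,u) = (s ⊖ u, u)` on
`ℤ_M` with `𝒮 = {0,…,M_S−1}` (`M ≥ M_S ≥ 1`, `S ~ P_S` arbitrary, `U`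
uniform on `ℤ_M` independent of `S`) together with the decoder
`g*(x,y) = x ⊕ y` (if `x ⊕ y ∈ 𝒮`, else `λ`) realizes a (2,2)-threshold
scheme with correlation level `log₂ M − H(S)` in the non-asymptotic sense:
`g*(X,Y) = S` a.s. (so `H(S|X,Y) = 0`), `S` is independent of each share
(so `H(S|X) = H(S|Y) = H(S)`), `I(X;Y) = log₂ M − H(S)`, and
`|𝒳| = |𝒴| = |𝒰| = M`, `|𝒮| = M_S`. -/
theorem statement17 {Ω : Type} [Fintype Ω] (M MS : ℕ) [NeZero M]
    (hMS : 1 ≤ MS) (hM : MS ≤ M)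
    (PS : Fin MS → ℝ) (hPS : IsPMF PS)
    (p : Ω → ℝ) (hp : IsPMF p)
    (S : Ω → Fin MS) (hS : ∀ s, distOf p S s = PS s)
    (U : Ω → ZMod M) (hU : ∀ u, distOf p U u = 1 / (M : ℝ))
    (hSU : IndepRV p S U)
    (X : Ω → ZMod M) (hX : ∀ ω, X ω = ((S ω : ℕ) : ZMod M) - U ω)
    (Y : Ω → ZMod M) (hY : ∀ ω, Y ω = U ω)
    (g : ZMod M × ZMod M → Option (Fin MS))
    (hg : ∀ xy : ZMod M × ZMod M,
      g xy = if h : (xy.1 + xy.2).val < MS then some ⟨(xy.1 + xy.2).val, h⟩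
             else none) :
    (∑ ω ∈ Finset.univ.filter (fun ω => g (X ω, Y ω) ≠ some (S ω)), p ω = 0) ∧
    condEnt p S (fun ω => (X ω, Y ω)) = 0 ∧
    IndepRV p S X ∧ IndepRV p S Y ∧
    condEnt p S X = entRV p S ∧ condEnt p S Y = entRV p S ∧
    MI p X Y = Real.logb 2 M - entRV p S ∧
    Fintype.card (ZMod M) = M ∧ Fintype.card (Fin MS) = MS := by
  obtain ⟨hdecode, h⟩ := statement17_general _ _ (isPartialInv_natCast_zmod hM) p hp S U
    (by simpa only [ZMod.card] using hU) hSU X hX Y hY g hg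
  simpa [hdecode] using h
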